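/- Let G=(V,E) be a finite connected graph with normalized adjacency eigenvalues μ_n ≤ μ_{n-1} ≤ … ≤ μ_2 ≤ μ_1 = 1 and edge-expansion h, and suppose 1 + μ_{n-1} < (1 − μ_2)/2. Then (√2/2)·h ≤ (√(1+μ_n) + √(1+μ_{n-1})) / ( √(1 − (1+μ_n)/(1−μ_2)) · √(1 − (1+μ_{n-1})/(1−μ_2)) − √((1+μ_n)/(1−μ_2)) · √((1+μ_{n-1})/(1−μ_2)) ). -/

import Mathlib

open Finset Polynomial

noncomputable section
open scoped Classical

/-- The normalized adjacency matrix `D⁻¹A` of a finite graph. -/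
def normAdj {V : Type*} [Fintype V] (G : SimpleGraph V) : Matrix V V ℝ :=
  Matrix.of fun u v => if G.Adj u v then ((G.degree u : ℝ))⁻¹ else 0

/-- The volume of a vertex subset: the sum of the degrees of its vertices. -/
def vol {V : Type*} [Fintype V] (G : SimpleGraph V) (S : Finset V) : ℝ :=
  ∑ u ∈ S, (G.degree u : ℝ)

/-- The number of boundary edges of a vertex subset, i.e. edges with exactly one
endpoint in `S`. -/
def bdry {V : Type*} [Fintype V] (G : SimpleGraph V) (S : Finset V) : ℝ :=
  ∑ u ∈ S, ∑ v ∈ Sᶜ, if G.Adj u v then (1 : ℝ) else 0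

/-- The edge-expansion (Cheeger constant)
`h = min_{∅ ≠ S ⊊ V} |∂S| / min(vol S, vol Sᶜ)`. -/
def cheeger {V : Type*} [Fintype V] (G : SimpleGraph V) : ℝ :=
  sInf { x : ℝ | ∃ S : Finset V, S.Nonempty ∧ S ≠ Finset.univ ∧
    x = bdry G S / min (vol G S) (vol G Sᶜ) }

/-! Since `φₙ ⟂ φₙ₋₁` in `ℓ²(d)`, the product `φₙ φₙ₋₁` has mean zero, so `h ∑ d |φₙ φₙ₋₁|` is at
most its total variation, which the Cauchy-Schwarz inequality bounds by the energies
`∑ (φ x + φ y)² = 2 (1 + μ)` of the two eigenfunctions. Conversely `|φₙ|` and `|φₙ₋₁|` have small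
Dirichlet energy, so by the spectral gap both lie at a small angle from the constants; their own
angle is then at most the sum of the two, and `∑ d |φₙ φₙ₋₁|` is at least the cosine of that sum.
-/

section InnerProductSpace

open scoped InnerProductSpace

variable {E : Type*} [NormedAddCommGroup E] [InnerProductSpace ℝ E]

lemma abs_inner_sub_inner_mul_inner_le {e : E} (he : ‖e‖ = 1) (p q : E) :
    |⟪p, q⟫_ℝ - ⟪p, e⟫_ℝ * ⟪q, e⟫_ℝ| ≤ √(‖p‖ ^ 2 - ⟪p, e⟫_ℝ ^ 2) * √(‖q‖ ^ 2 - ⟪q, e⟫_ℝ ^ 2) := by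
  have inner_proj (v w : E) : ⟪v - ⟪v, e⟫_ℝ • e, w - ⟪w, e⟫_ℝ • e⟫_ℝ =
      ⟪v, w⟫_ℝ - ⟪v, e⟫_ℝ * ⟪w, e⟫_ℝ := by
    simp only [inner_sub_left, inner_sub_right, real_inner_smul_left, real_inner_smul_right,
      real_inner_self_eq_norm_sq, he, real_inner_comm w e]
    ring
  have norm_proj (v : E) : ‖v - ⟪v, e⟫_ℝ • e‖ = √(‖v‖ ^ 2 - ⟪v, e⟫_ℝ ^ 2) := by
    rw [norm_eq_sqrt_real_inner, inner_proj, real_inner_self_eq_norm_sq, ← sq]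
  rw [← inner_proj, ← norm_proj, ← norm_proj]
  exact abs_real_inner_le_norm _ _

/- With `√s = sin α` and `√t = sin β`, the left-hand side of the conclusion is `cos (α + β)`. -/
lemma sqrt_mul_sqrt_sub_le_inner {e p q : E} (he : ‖e‖ = 1) (hp : ‖p‖ = 1) (hq : ‖q‖ = 1)
    (hpe : 0 ≤ ⟪p, e⟫_ℝ) (hqe : 0 ≤ ⟪q, e⟫_ℝ) {s t : ℝ} (hs : 1 - s ≤ ⟪p, e⟫_ℝ ^ 2)
    (ht : 1 - t ≤ ⟪q, e⟫_ℝ ^ 2) : √(1 - s) * √(1 - t) - √s * √t ≤ ⟪p, q⟫_ℝ := by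
  have hcos : √(1 - s) * √(1 - t) ≤ ⟪p, e⟫_ℝ * ⟪q, e⟫_ℝ :=
    mul_le_mul (Real.sqrt_le_iff.2 ⟨hpe, hs⟩) (Real.sqrt_le_iff.2 ⟨hqe, ht⟩)
      (Real.sqrt_nonneg _) hpe
  have hsin : √(‖p‖ ^ 2 - ⟪p, e⟫_ℝ ^ 2) * √(‖q‖ ^ 2 - ⟪q, e⟫_ℝ ^ 2) ≤ √s * √t := by
    gcongr <;> simp only [hp, hq] <;> linarith
  linarith [(abs_le.1 (abs_inner_sub_inner_mul_inner_le he p q)).1]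

variable {ι : Type*} [Fintype ι] {T : E →ₗ[ℝ] E} {μ : ι → ℝ}

lemma inner_basis_apply_of_eigenbasis (b : OrthonormalBasis ι ℝ E) (hb : ∀ i, T (b i) = μ i • b i)
    (i : ι) (v : E) : ⟪b i, T v⟫_ℝ = μ i * ⟪b i, v⟫_ℝ := by
  conv_lhs => rw [← b.sum_repr' v]
  simp only [map_sum, map_smul, hb, inner_sum, real_inner_smul_right, b.inner_eq_ite, mul_ite,
    mul_one, mul_zero, Finset.sum_ite_eq, Finset.mem_univ, if_true]
  ring

lemma inner_apply_le_of_spectral_gap (b : OrthonormalBasis ι ℝ E)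
    (hb : ∀ i, T (b i) = μ i • b i) {i₀ : ι} {m : ℝ} (hm : ∀ i, i ≠ i₀ → μ i ≤ m)
    (hgap : m < μ i₀) {e : E} (he : ‖e‖ = 1) (hTe : T e = μ i₀ • e) (v : E) :
    ⟪T v, v⟫_ℝ ≤ m * ‖v‖ ^ 2 + (μ i₀ - m) * ⟪v, e⟫_ℝ ^ 2 := by
  have he_perp (i : ι) (hi : i ≠ i₀) : ⟪b i, e⟫_ℝ = 0 := by
    have h := inner_basis_apply_of_eigenbasis b hb i e
    rw [hTe, real_inner_smul_right] at h
    have : (μ i₀ - μ i) * ⟪b i, e⟫_ℝ = 0 := by linarith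
    exact (mul_eq_zero.1 this).resolve_left (by linarith [hm i hi])
  have he_sq : ⟪b i₀, e⟫_ℝ ^ 2 = 1 := by
    have hsum := b.sum_sq_inner_right e
    rwa [Finset.sum_eq_single i₀ (fun i _ hi => by rw [he_perp i hi, zero_pow two_ne_zero])
      (by simp), he, one_pow] at hsum
  have hve : ⟪v, e⟫_ℝ ^ 2 = ⟪b i₀, v⟫_ℝ ^ 2 := by
    rw [← b.sum_inner_mul_inner, Finset.sum_eq_single i₀
      (fun i _ hi => by rw [he_perp i hi, mul_zero]) (by simp), mul_pow, he_sq, mul_one,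
      real_inner_comm]
  calc ⟪T v, v⟫_ℝ = ∑ i, μ i * ⟪b i, v⟫_ℝ ^ 2 := by
        rw [← b.sum_inner_mul_inner]
        refine Finset.sum_congr rfl fun i _ => ?_
        rw [real_inner_comm, inner_basis_apply_of_eigenbasis b hb]
        ring
    _ ≤ ∑ i, (m * ⟪b i, v⟫_ℝ ^ 2 + if i = i₀ then (μ i₀ - m) * ⟪b i₀, v⟫_ℝ ^ 2 else 0) := by
        refine Finset.sum_le_sum fun i _ => ?_
        split_ifs with hi
        · rw [hi]; linarith
        · rw [add_zero]; exact mul_le_mul_of_nonneg_right (hm i hi) (sq_nonneg _)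
    _ = m * ‖v‖ ^ 2 + (μ i₀ - m) * ⟪v, e⟫_ℝ ^ 2 := by
        rw [Finset.sum_add_distrib, ← Finset.mul_sum, b.sum_sq_inner_right, Finset.sum_ite_eq',
          if_pos (Finset.mem_univ _), hve]

lemma exists_equiv_comp_eq_of_map_univ_eq {κ α : Type*} [Fintype κ] {f : ι → α} {g : κ → α}
    (h : univ.val.map f = univ.val.map g) : ∃ e : ι ≃ κ, g ∘ e = f := by
  have fiber (y : α) : Nonempty ({x // f x = y} ≃ {x // g x = y}) := by
    have hcount := congrArg (Multiset.count y) h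
    simp only [Multiset.count_map, ← Finset.filter_val, Finset.card_val, eq_comm (a := y)] at hcount
    exact ⟨Fintype.equivOfCardEq (by simpa only [Fintype.card_subtype] using hcount)⟩
  exact ⟨Equiv.ofFiberEquiv fun y => (fiber y).some, funext (Equiv.ofFiberEquiv_map _)⟩

lemma exists_eigenbasis_of_charpoly_eq_prod [FiniteDimensional ℝ E] (hT : T.IsSymmetric)
    (hchar : T.charpoly = ∏ i, (X - C (μ i))) :
    ∃ b : OrthonormalBasis ι ℝ E, ∀ i, T (b i) = μ i • b i := by
  have hroots : univ.val.map μ = univ.val.map (hT.eigenvalues rfl) := by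
    rw [← roots_multiset_prod_X_sub_C (univ.val.map μ), Multiset.map_map]
    exact (congrArg roots hchar).symm.trans (hT.roots_charpoly_eq_eigenvalues rfl)
  obtain ⟨e, he⟩ := exists_equiv_comp_eq_of_map_univ_eq hroots
  refine ⟨(hT.eigenvectorBasis rfl).reindex e.symm, fun i => ?_⟩
  simp [← he]

end InnerProductSpace

section WeightedL2

open scoped InnerProductSpace

variable {V : Type*} [Fintype V] {a : Matrix V V ℝ} {d : V → ℝ}

/-- The isometry `u ↦ √d · u` from the weighted space `ℓ²(d)` onto Euclidean space; it carries the
weighted inner product of functions on the vertices to the inner product of Mathlib. -/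
def weightEquiv (hd : ∀ x, 0 < d x) : (V → ℝ) ≃ₗ[ℝ] EuclideanSpace ℝ V :=
  (LinearEquiv.piCongrRight fun x =>
    LinearEquiv.smulOfNeZero ℝ ℝ (√(d x)) (Real.sqrt_pos.2 (hd x)).ne').trans
    (WithLp.linearEquiv 2 ℝ (V → ℝ)).symm

/-- The transition matrix `D⁻¹a` of the random walk with edge weights `a` and vertex weights `d`. -/
def walkMatrix (a : Matrix V V ℝ) (d : V → ℝ) : Matrix V V ℝ :=
  Matrix.of fun x y => a x y / d x

/-- The random walk `D⁻¹a` as an operator on Euclidean space, transported along `weightEquiv`. In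
coordinates it is the symmetric normalization `D^{-1/2} a D^{-1/2}`. -/
def walkOperator (a : Matrix V V ℝ) (hd : ∀ x, 0 < d x) :
    EuclideanSpace ℝ V →ₗ[ℝ] EuclideanSpace ℝ V :=
  (weightEquiv hd).conj (Matrix.toLin' (walkMatrix a d))

/-- The normalized constant function in `ℓ²(d)`, seen in Euclidean space. -/
def unitConst (hd : ∀ x, 0 < d x) : EuclideanSpace ℝ V :=
  ‖weightEquiv hd 1‖⁻¹ • weightEquiv hd 1

lemma charpoly_walkOperator (hd : ∀ x, 0 < d x) :
    (walkOperator a hd).charpoly = (walkMatrix a d).charpoly := by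
  rw [walkOperator, LinearEquiv.charpoly_conj, Matrix.charpoly_toLin']

lemma inner_weightEquiv (hd : ∀ x, 0 < d x) (u v : V → ℝ) :
    ⟪weightEquiv hd u, weightEquiv hd v⟫_ℝ = ∑ x, d x * (u x * v x) := by
  have happly (w : V → ℝ) (x : V) : weightEquiv hd w x = √(d x) * w x := rfl
  simp only [PiLp.inner_apply, happly, RCLike.inner_apply, conj_trivial]
  refine Finset.sum_congr rfl fun x _ => ?_
  rw [mul_mul_mul_comm, Real.mul_self_sqrt (hd x).le, mul_comm (v x)]

lemma norm_weightEquiv_sq (hd : ∀ x, 0 < d x) (u : V → ℝ) :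
    ‖weightEquiv hd u‖ ^ 2 = ∑ x, d x * u x ^ 2 := by
  rw [← real_inner_self_eq_norm_sq, inner_weightEquiv]
  simp only [sq]

lemma norm_weightEquiv_abs (hd : ∀ x, 0 < d x) (u : V → ℝ) :
    ‖weightEquiv hd |u|‖ = ‖weightEquiv hd u‖ := by
  rw [← sq_eq_sq₀ (norm_nonneg _) (norm_nonneg _)]
  simp only [norm_weightEquiv_sq, Pi.abs_apply, sq_abs]

lemma walkOperator_weightEquiv (hd : ∀ x, 0 < d x) (u : V → ℝ) :
    walkOperator a hd (weightEquiv hd u) = weightEquiv hd fun x => (∑ y, a x y * u y) / d x := by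
  rw [walkOperator, LinearEquiv.conj_apply_apply, LinearEquiv.symm_apply_apply,
    Matrix.toLin'_apply]
  congr 1
  ext x
  simp only [walkMatrix, Matrix.mulVec, dotProduct, Matrix.of_apply, Finset.sum_div,
    div_mul_eq_mul_div]

lemma inner_walkOperator (hd : ∀ x, 0 < d x) (u v : V → ℝ) :
    ⟪walkOperator a hd (weightEquiv hd u), weightEquiv hd v⟫_ℝ =
      ∑ x, ∑ y, a x y * (u y * v x) := by
  rw [walkOperator_weightEquiv, inner_weightEquiv]
  refine Finset.sum_congr rfl fun x _ => ?_
  rw [← mul_assoc, mul_div_cancel₀ _ (hd x).ne', Finset.sum_mul]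
  simp only [mul_assoc]

lemma isSymmetric_walkOperator (hsymm : ∀ x y, a x y = a y x) (hd : ∀ x, 0 < d x) :
    (walkOperator a hd).IsSymmetric := by
  intro p q
  obtain ⟨u, rfl⟩ := (weightEquiv hd).surjective p
  obtain ⟨v, rfl⟩ := (weightEquiv hd).surjective q
  rw [real_inner_comm (walkOperator a hd _), inner_walkOperator, inner_walkOperator,
    Finset.sum_comm]
  simp only [fun x y => hsymm y x, mul_comm]

lemma norm_unitConst [Nonempty V] (hd : ∀ x, 0 < d x) : ‖unitConst hd‖ = 1 :=
  norm_smul_inv_norm ((weightEquiv hd).map_ne_zero_iff.2 one_ne_zero)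

lemma walkOperator_unitConst (hrow : ∀ x, ∑ y, a x y = d x) (hd : ∀ x, 0 < d x) :
    walkOperator a hd (unitConst hd) = unitConst hd := by
  rw [unitConst, map_smul, walkOperator_weightEquiv]
  congr 2
  ext x
  simp only [Pi.one_apply, mul_one, hrow, div_self (hd x).ne']

lemma inner_unitConst_nonneg (hd : ∀ x, 0 < d x) {u : V → ℝ} (hu : ∀ x, 0 ≤ u x) :
    0 ≤ ⟪weightEquiv hd u, unitConst hd⟫_ℝ := by
  rw [unitConst, real_inner_smul_right, inner_weightEquiv]
  exact mul_nonneg (inv_nonneg.2 (norm_nonneg _)) <| Finset.sum_nonneg fun x _ =>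
    mul_nonneg (hd x).le (mul_nonneg (hu x) zero_le_one)

end WeightedL2

section Energy

open scoped InnerProductSpace

variable {V : Type*} [Fintype V] {a : Matrix V V ℝ} {d : V → ℝ}

/-- The Dirichlet energy of a function on the vertices of a weighted graph. The sum is over ordered
pairs, so that each edge counts twice. -/
def dirichletEnergy (a : Matrix V V ℝ) (u : V → ℝ) : ℝ :=
  ∑ x, ∑ y, a x y * (u x - u y) ^ 2

/-- The quadratic form of the signless Laplacian, which vanishes on functions that change sign along
every edge. The sum is over ordered pairs, as in `dirichletEnergy`. -/
def signlessEnergy (a : Matrix V V ℝ) (u : V → ℝ) : ℝ :=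
  ∑ x, ∑ y, a x y * (u x + u y) ^ 2

lemma signlessEnergy_nonneg (ha : ∀ x y, 0 ≤ a x y) (u : V → ℝ) : 0 ≤ signlessEnergy a u :=
  Finset.sum_nonneg fun x _ => Finset.sum_nonneg fun y _ => mul_nonneg (ha x y) (sq_nonneg _)

lemma sum_mul_add_mul_sq_eq (hsymm : ∀ x y, a x y = a y x) (hrow : ∀ x, ∑ y, a x y = d x)
    (hd : ∀ x, 0 < d x) (u : V → ℝ) (c : ℝ) :
    ∑ x, ∑ y, a x y * (u x + c * u y) ^ 2 = (1 + c ^ 2) * ‖weightEquiv hd u‖ ^ 2 +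
      2 * c * ⟪walkOperator a hd (weightEquiv hd u), weightEquiv hd u⟫_ℝ := by
  have hleft : ∑ x, ∑ y, a x y * u x ^ 2 = ‖weightEquiv hd u‖ ^ 2 := by
    simp only [norm_weightEquiv_sq, ← Finset.sum_mul, hrow]
  have hright : ∑ x, ∑ y, a x y * u y ^ 2 = ‖weightEquiv hd u‖ ^ 2 := by
    rw [Finset.sum_comm, ← hleft]
    simp only [fun x y => hsymm y x]
  rw [add_mul, one_mul]
  nth_rewrite 1 [← hleft]
  rw [← hright, inner_walkOperator]
  simp only [Finset.mul_sum, ← Finset.sum_add_distrib]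
  exact Finset.sum_congr rfl fun x _ => Finset.sum_congr rfl fun y _ => by ring

lemma dirichletEnergy_eq (hsymm : ∀ x y, a x y = a y x) (hrow : ∀ x, ∑ y, a x y = d x)
    (hd : ∀ x, 0 < d x) (u : V → ℝ) :
    dirichletEnergy a u = 2 * (‖weightEquiv hd u‖ ^ 2 -
      ⟪walkOperator a hd (weightEquiv hd u), weightEquiv hd u⟫_ℝ) := by
  have h := sum_mul_add_mul_sq_eq hsymm hrow hd u (-1)
  simp only [neg_one_mul, ← sub_eq_add_neg] at h
  rw [dirichletEnergy, h]
  ring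

lemma signlessEnergy_eq (hsymm : ∀ x y, a x y = a y x) (hrow : ∀ x, ∑ y, a x y = d x)
    (hd : ∀ x, 0 < d x) (u : V → ℝ) :
    signlessEnergy a u = 2 * (‖weightEquiv hd u‖ ^ 2 +
      ⟪walkOperator a hd (weightEquiv hd u), weightEquiv hd u⟫_ℝ) := by
  have h := sum_mul_add_mul_sq_eq hsymm hrow hd u 1
  simp only [one_mul] at h
  rw [signlessEnergy, h]
  ring

lemma signlessEnergy_eq_of_eigen (hsymm : ∀ x y, a x y = a y x) (hrow : ∀ x, ∑ y, a x y = d x)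
    (hd : ∀ x, 0 < d x) {u : V → ℝ} {α : ℝ} (hu : ‖weightEquiv hd u‖ = 1)
    (heigen : walkOperator a hd (weightEquiv hd u) = α • weightEquiv hd u) :
    signlessEnergy a u = 2 * (1 + α) := by
  rw [signlessEnergy_eq hsymm hrow hd, heigen, real_inner_smul_left, real_inner_self_eq_norm_sq,
    hu, one_pow, mul_one]

lemma one_add_nonneg_of_eigen (ha : ∀ x y, 0 ≤ a x y) (hsymm : ∀ x y, a x y = a y x)
    (hrow : ∀ x, ∑ y, a x y = d x) (hd : ∀ x, 0 < d x) {p : EuclideanSpace ℝ V} {α : ℝ}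
    (hp : ‖p‖ = 1) (heigen : walkOperator a hd p = α • p) : 0 ≤ 1 + α := by
  obtain ⟨u, rfl⟩ := (weightEquiv hd).surjective p
  linarith [signlessEnergy_eq_of_eigen hsymm hrow hd hp heigen, signlessEnergy_nonneg ha u]

lemma dirichletEnergy_le (ha : ∀ x y, 0 ≤ a x y) (hsymm : ∀ x y, a x y = a y x)
    (hrow : ∀ x, ∑ y, a x y = d x) (hd : ∀ x, 0 < d x) (u : V → ℝ) :
    dirichletEnergy a u ≤ 4 * ‖weightEquiv hd u‖ ^ 2 := by
  linarith [dirichletEnergy_eq hsymm hrow hd u, signlessEnergy_eq hsymm hrow hd u,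
    signlessEnergy_nonneg ha u]

lemma dirichletEnergy_abs_le_signlessEnergy (ha : ∀ x y, 0 ≤ a x y) (u : V → ℝ) :
    dirichletEnergy a |u| ≤ signlessEnergy a u := by
  refine Finset.sum_le_sum fun x _ => Finset.sum_le_sum fun y _ =>
    mul_le_mul_of_nonneg_left (sq_le_sq.2 ?_) (ha x y)
  simpa only [Pi.abs_apply, abs_neg, sub_neg_eq_add] using
    abs_abs_sub_abs_le_abs_sub (u x) (-u y)

lemma poincare_of_spectral_gap [Nonempty V] {ι : Type*} [Fintype ι] {μ : ι → ℝ}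
    (hsymm : ∀ x y, a x y = a y x) (hrow : ∀ x, ∑ y, a x y = d x) (hd : ∀ x, 0 < d x)
    (b : OrthonormalBasis ι ℝ (EuclideanSpace ℝ V))
    (hb : ∀ i, walkOperator a hd (b i) = μ i • b i) {i₀ : ι} (hi₀ : μ i₀ = 1) {m : ℝ}
    (hm : ∀ i, i ≠ i₀ → μ i ≤ m) (hm1 : m < 1) (u : V → ℝ) :
    2 * (1 - m) * (‖weightEquiv hd u‖ ^ 2 - ⟪weightEquiv hd u, unitConst hd⟫_ℝ ^ 2) ≤
      dirichletEnergy a u := by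
  have hgap := inner_apply_le_of_spectral_gap b hb hm (hi₀ ▸ hm1) (norm_unitConst hd)
    (by rw [hi₀, one_smul, walkOperator_unitConst hrow]) (weightEquiv hd u)
  rw [hi₀] at hgap
  rw [dirichletEnergy_eq hsymm hrow hd]
  linarith

lemma one_sub_le_inner_abs_unitConst_sq (ha : ∀ x y, 0 ≤ a x y) (hsymm : ∀ x y, a x y = a y x)
    (hrow : ∀ x, ∑ y, a x y = d x) (hd : ∀ x, 0 < d x) {κ : ℝ} (hκ : 0 < κ) {u : V → ℝ}
    (hpoincare : 2 * κ * (‖weightEquiv hd |u|‖ ^ 2 - ⟪weightEquiv hd |u|, unitConst hd⟫_ℝ ^ 2) ≤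
      dirichletEnergy a |u|) {α : ℝ} (hu : ‖weightEquiv hd u‖ = 1)
    (heigen : walkOperator a hd (weightEquiv hd u) = α • weightEquiv hd u) :
    1 - (1 + α) / κ ≤ ⟪weightEquiv hd |u|, unitConst hd⟫_ℝ ^ 2 := by
  have henergy := hpoincare.trans (dirichletEnergy_abs_le_signlessEnergy ha u)
  rw [signlessEnergy_eq_of_eigen hsymm hrow hd hu heigen, norm_weightEquiv_abs, hu, one_pow,
    mul_assoc, mul_le_mul_iff_right₀ two_pos, ← le_div_iff₀' hκ] at henergy
  linarith

lemma sum_mul_abs_mul_le_sqrt_mul_sqrt {ι : Type*} [Fintype ι] {w : ι → ℝ} (hw : ∀ i, 0 ≤ w i)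
    (f g : ι → ℝ) : ∑ i, w i * |f i * g i| ≤ √(∑ i, w i * f i ^ 2) * √(∑ i, w i * g i ^ 2) := by
  have h := Real.sum_mul_le_sqrt_mul_sqrt univ (fun i => √(w i) * |f i|) fun i => √(w i) * |g i|
  simp only [mul_pow, Real.sq_sqrt (hw _), sq_abs] at h
  refine (Finset.sum_congr rfl fun i _ => ?_).trans_le h
  rw [abs_mul, mul_mul_mul_comm, Real.mul_self_sqrt (hw i)]

lemma sum_mul_abs_add_mul_sub_le (ha : ∀ x y, 0 ≤ a x y) (f g : V → ℝ) :
    ∑ x, ∑ y, a x y * |(f x + f y) * (g x - g y)| ≤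
      √(signlessEnergy a f) * √(dirichletEnergy a g) := by
  simpa only [signlessEnergy, dirichletEnergy, Fintype.sum_prod_type] using
    sum_mul_abs_mul_le_sqrt_mul_sqrt (w := fun p : V × V => a p.1 p.2) (fun p => ha p.1 p.2)
      (fun p => f p.1 + f p.2) fun p => g p.1 - g p.2

lemma sum_mul_abs_mul_sub_mul_le (ha : ∀ x y, 0 ≤ a x y) (f g : V → ℝ) :
    2 * ∑ x, ∑ y, a x y * |f x * g x - f y * g y| ≤
      √(signlessEnergy a f) * √(dirichletEnergy a g) +
        √(signlessEnergy a g) * √(dirichletEnergy a f) := by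
  refine le_trans ?_ (add_le_add (sum_mul_abs_add_mul_sub_le ha f g)
    (sum_mul_abs_add_mul_sub_le ha g f))
  simp only [Finset.mul_sum, ← Finset.sum_add_distrib]
  refine Finset.sum_le_sum fun x _ => Finset.sum_le_sum fun y _ => ?_
  have hpolar : 2 * |f x * g x - f y * g y| ≤
      |(f x + f y) * (g x - g y)| + |(g x + g y) * (f x - f y)| := by
    rw [← abs_two, ← abs_mul]
    refine (congrArg abs ?_).trans_le (abs_add_le _ _)
    ring
  linarith [mul_le_mul_of_nonneg_left hpolar (ha x y)]

lemma sum_mul_abs_mul_sub_mul_le_of_eigen (ha : ∀ x y, 0 ≤ a x y) (hsymm : ∀ x y, a x y = a y x)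
    (hrow : ∀ x, ∑ y, a x y = d x) (hd : ∀ x, 0 < d x) {u v : V → ℝ} {α β : ℝ}
    (hu : ‖weightEquiv hd u‖ = 1) (hv : ‖weightEquiv hd v‖ = 1)
    (hα : walkOperator a hd (weightEquiv hd u) = α • weightEquiv hd u)
    (hβ : walkOperator a hd (weightEquiv hd v) = β • weightEquiv hd v) :
    ∑ x, ∑ y, a x y * |u x * v x - u y * v y| ≤ √2 * (√(1 + α) + √(1 + β)) := by
  have hsqrt {w : V → ℝ} (hw : ‖weightEquiv hd w‖ = 1) : √(dirichletEnergy a w) ≤ 2 := by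
    refine Real.sqrt_le_iff.2 ⟨zero_le_two, ?_⟩
    have := dirichletEnergy_le ha hsymm hrow hd w
    rw [hw] at this
    linarith
  have hvariation := sum_mul_abs_mul_sub_mul_le ha u v
  rw [signlessEnergy_eq_of_eigen hsymm hrow hd hu hα,
    signlessEnergy_eq_of_eigen hsymm hrow hd hv hβ, Real.sqrt_mul zero_le_two,
    Real.sqrt_mul zero_le_two] at hvariation
  have hα_term := mul_le_mul_of_nonneg_left (hsqrt hv) (by positivity : 0 ≤ √2 * √(1 + α))
  have hβ_term := mul_le_mul_of_nonneg_left (hsqrt hu) (by positivity : 0 ≤ √2 * √(1 + β))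
  linarith

end Energy

section Isoperimetry

/- The layers are nested: the support of the function built so far lies in the new layer `T`. -/
lemma layer_induction {V : Type*} [Finite V] {P : (V → ℝ) → Prop} (zero : P 0)
    (add_layer : ∀ (q : V → ℝ) (T : Finset V) (t : ℝ), (∀ x, 0 ≤ q x) → (∀ x, x ∉ T → q x = 0) →
      0 < t → P q → P fun x => q x + t * if x ∈ T then 1 else 0)
    (q : V → ℝ) (hq : ∀ x, 0 ≤ q x) : P q := by
  cases nonempty_fintype V
  induction hcard : #{x | 0 < q x} using Nat.strong_induction_on generalizing q with
  | _ n ih =>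
  set T : Finset V := {x | 0 < q x} with hT
  have mem_T (x : V) : x ∈ T ↔ 0 < q x := by rw [hT, Finset.mem_filter_univ]
  have eq_zero (x : V) (hx : x ∉ T) : q x = 0 :=
    le_antisymm (not_lt.1 fun h => hx ((mem_T x).2 h)) (hq x)
  rcases T.eq_empty_or_nonempty with hempty | hne
  · have : q = 0 := funext fun x => eq_zero x (hempty ▸ Finset.notMem_empty x)
    exact this ▸ zero
  obtain ⟨z, hz, hmin⟩ := T.exists_min_image q hne
  set q' : V → ℝ := fun x => q x - q z * if x ∈ T then 1 else 0 with hq'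
  have q'_nonneg (x : V) : 0 ≤ q' x := by
    by_cases hx : x ∈ T
    · simpa [hq', hx] using hmin x hx
    · simp [hq', hx, eq_zero x hx]
  have q'_eq_zero (x : V) (hx : x ∉ T) : q' x = 0 := by simp [hq', hx, eq_zero x hx]
  have hlt : ({x | 0 < q' x} : Finset V) ⊂ T := by
    refine (Finset.ssubset_iff_of_subset fun x hx => ?_).2 ⟨z, hz, by simp [hq', hz]⟩
    by_contra hxT
    exact ((Finset.mem_filter_univ _).1 hx).ne' (q'_eq_zero x hxT)
  have hP := add_layer q' T (q z) q'_nonneg q'_eq_zero ((mem_T z).1 hz)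
    (ih _ (hcard ▸ Finset.card_lt_card hlt) q' q'_nonneg rfl)
  simpa only [hq', sub_add_cancel] using hP

variable {V : Type*} [Fintype V] {a : Matrix V V ℝ} {d : V → ℝ} {c : ℝ}

lemma sum_mul_abs_indicator_sub (hsymm : ∀ x y, a x y = a y x) (S : Finset V) :
    ∑ x, ∑ y, a x y * |(if x ∈ S then (1 : ℝ) else 0) - if y ∈ S then 1 else 0| =
      2 * ∑ x ∈ S, ∑ y ∈ Sᶜ, a x y := by
  have hsplit (x y : V) : a x y * |(if x ∈ S then (1 : ℝ) else 0) - if y ∈ S then 1 else 0| =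
      (if x ∈ S then if y ∈ Sᶜ then a x y else 0 else 0) +
        if y ∈ S then if x ∈ Sᶜ then a y x else 0 else 0 := by
    by_cases hx : x ∈ S <;> by_cases hy : y ∈ S <;> simp [hx, hy, hsymm y x]
  have hcut : ∑ x, ∑ y, (if x ∈ S then if y ∈ Sᶜ then a x y else 0 else 0) =
      ∑ x ∈ S, ∑ y ∈ Sᶜ, a x y := by
    calc _ = ∑ x, if x ∈ S then ∑ y ∈ Sᶜ, a x y else 0 := by
          refine Finset.sum_congr rfl fun x _ => ?_
          split_ifs
          · rw [Finset.sum_ite_mem, Finset.univ_inter]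
          · exact Finset.sum_const_zero
      _ = ∑ x ∈ S, ∑ y ∈ Sᶜ, a x y := by rw [Finset.sum_ite_mem, Finset.univ_inter]
  have hcut' := Finset.sum_comm.trans hcut
  simp only [hsplit, Finset.sum_add_distrib]
  rw [hcut, hcut', two_mul]

lemma coarea_le (hsymm : ∀ x y, a x y = a y x) (q : V → ℝ) (hq : ∀ x, 0 ≤ q x)
    (hcut : ∀ S : Finset V, (∀ x ∈ S, 0 < q x) →
      c * ∑ x ∈ S, d x ≤ ∑ x ∈ S, ∑ y ∈ Sᶜ, a x y) :
    2 * c * ∑ x, d x * q x ≤ ∑ x, ∑ y, a x y * |q x - q y| := by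
  revert hcut
  refine layer_induction (P := fun q => (∀ S : Finset V, (∀ x ∈ S, 0 < q x) →
      c * ∑ x ∈ S, d x ≤ ∑ x ∈ S, ∑ y ∈ Sᶜ, a x y) →
    2 * c * ∑ x, d x * q x ≤ ∑ x, ∑ y, a x y * |q x - q y|) (fun _ => by simp) ?_ q hq
  intro q T t hq hqT ht ih hcut
  set χ : V → ℝ := fun x => if x ∈ T then 1 else 0 with hχ
  have hχ_nonneg (x : V) : 0 ≤ χ x := by simp only [hχ]; split_ifs <;> norm_num
  have hstep := ih fun S hS => hcut S fun x hx =>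
    add_pos_of_pos_of_nonneg (hS x hx) (mul_nonneg ht.le (hχ_nonneg x))
  have hlayer := hcut T fun x hx =>
    add_pos_of_nonneg_of_pos (hq x) (by simpa [hx] using ht)
  have habs (x y : V) : |q x + t * χ x - (q y + t * χ y)| = |q x - q y| + t * |χ x - χ y| := by
    by_cases hx : x ∈ T <;> by_cases hy : y ∈ T
    · simp [hχ, hx, hy]
    · simp [hχ, hx, hy, hqT y hy, abs_of_nonneg, hq x, ht.le, add_nonneg]
    · rw [abs_sub_comm, abs_sub_comm (q x), abs_sub_comm (χ x)]
      simp [hχ, hx, hy, hqT x hx, abs_of_nonneg, hq y, ht.le, add_nonneg]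
    · simp [hχ, hx, hy]
  have hmass : ∑ x, d x * (q x + t * χ x) = ∑ x, d x * q x + t * ∑ x ∈ T, d x := by
    simp only [hχ, mul_add, Finset.sum_add_distrib, mul_ite, mul_one, mul_zero,
      Finset.sum_ite_mem, Finset.univ_inter]
    rw [← Finset.sum_mul, mul_comm t]
  have hvariation : ∑ x, ∑ y, a x y * |q x + t * χ x - (q y + t * χ y)| =
      ∑ x, ∑ y, a x y * |q x - q y| + t * (2 * ∑ x ∈ T, ∑ y ∈ Tᶜ, a x y) := by
    rw [← sum_mul_abs_indicator_sub hsymm]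
    change ∑ x, ∑ y, a x y * |q x + t * χ x - (q y + t * χ y)| =
      _ + t * ∑ x, ∑ y, a x y * |χ x - χ y|
    simp only [habs, mul_add, Finset.sum_add_distrib, mul_left_comm _ t, ← Finset.mul_sum]
  rw [hmass, hvariation]
  linarith [mul_le_mul_of_nonneg_left hlayer ht.le]

lemma sum_mul_abs_eq_two_mul_sum_mul_max {p : V → ℝ} (hp : ∑ x, d x * p x = 0) :
    ∑ x, d x * |p x| = 2 * ∑ x, d x * max (p x) 0 := by
  have : ∑ x, d x * |p x| = ∑ x, d x * |p x| + ∑ x, d x * p x := by rw [hp, add_zero]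
  rw [this, ← Finset.sum_add_distrib, Finset.mul_sum]
  refine Finset.sum_congr rfl fun x _ => ?_
  rcases le_total (p x) 0 with h | h
  · rw [max_eq_right h, abs_of_nonpos h]; ring
  · rw [max_eq_left h, abs_of_nonneg h]; ring

/- One of the supports of the positive and the negative part carries at most half of the weight, and
both parts have the same mass because `p` has mean zero. -/
lemma mul_sum_mul_abs_le_of_mean_zero (ha : ∀ x y, 0 ≤ a x y) (hsymm : ∀ x y, a x y = a y x)
    (hd : ∀ x, 0 ≤ d x)
    (hcut : ∀ S : Finset V, ∑ x ∈ S, d x ≤ ∑ x ∈ Sᶜ, d x →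
      c * ∑ x ∈ S, d x ≤ ∑ x ∈ S, ∑ y ∈ Sᶜ, a x y)
    (p : V → ℝ) (hp : ∑ x, d x * p x = 0) :
    c * ∑ x, d x * |p x| ≤ ∑ x, ∑ y, a x y * |p x - p y| := by
  wlog hhalf : ∑ x with 0 < p x, d x ≤ ∑ x with 0 < -p x, d x generalizing p
  · have h := this (fun x => -p x) (by simpa using hp) (by simpa using (not_le.1 hhalf).le)
    simpa only [abs_neg, neg_sub_neg, abs_sub_comm] using h
  have hpos_cut (S : Finset V) (hS : ∀ x ∈ S, 0 < max (p x) 0) :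
      c * ∑ x ∈ S, d x ≤ ∑ x ∈ S, ∑ y ∈ Sᶜ, a x y := by
    replace hS (x : V) (hx : x ∈ S) : 0 < p x := by simpa using hS x hx
    refine hcut S ?_
    calc ∑ x ∈ S, d x ≤ ∑ x with 0 < p x, d x :=
          Finset.sum_le_sum_of_subset_of_nonneg
            (fun x hx => (Finset.mem_filter_univ _).2 (hS x hx)) fun x _ _ => hd x
      _ ≤ ∑ x with 0 < -p x, d x := hhalf
      _ ≤ ∑ x ∈ Sᶜ, d x := by
          refine Finset.sum_le_sum_of_subset_of_nonneg (fun x hx => ?_) fun x _ _ => hd x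
          rw [Finset.mem_compl]
          intro hxS
          linarith [hS x hxS, (Finset.mem_filter_univ x).1 hx]
  calc c * ∑ x, d x * |p x| = 2 * c * ∑ x, d x * max (p x) 0 := by
        rw [sum_mul_abs_eq_two_mul_sum_mul_max hp]; ring
    _ ≤ ∑ x, ∑ y, a x y * |max (p x) 0 - max (p y) 0| :=
        coarea_le hsymm _ (fun x => le_max_right _ _) hpos_cut
    _ ≤ ∑ x, ∑ y, a x y * |p x - p y| :=
        Finset.sum_le_sum fun x _ => Finset.sum_le_sum fun y _ =>
          mul_le_mul_of_nonneg_left (abs_max_sub_max_le_abs _ _ _) (ha x y)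

end Isoperimetry

section WeightedGraph

open scoped InnerProductSpace

variable {V : Type*} [Fintype V] {a : Matrix V V ℝ} {d : V → ℝ}

lemma sqrt_mul_sqrt_sub_le_sum_abs [Nonempty V] (ha : ∀ x y, 0 ≤ a x y)
    (hsymm : ∀ x y, a x y = a y x) (hrow : ∀ x, ∑ y, a x y = d x) (hd : ∀ x, 0 < d x) {κ : ℝ}
    (hκ : 0 < κ)
    (hpoincare : ∀ u : V → ℝ, 2 * κ * (‖weightEquiv hd u‖ ^ 2 -
      ⟪weightEquiv hd u, unitConst hd⟫_ℝ ^ 2) ≤ dirichletEnergy a u)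
    {u v : V → ℝ} {α β : ℝ} (hu : ‖weightEquiv hd u‖ = 1) (hv : ‖weightEquiv hd v‖ = 1)
    (hα : walkOperator a hd (weightEquiv hd u) = α • weightEquiv hd u)
    (hβ : walkOperator a hd (weightEquiv hd v) = β • weightEquiv hd v) :
    √(1 - (1 + α) / κ) * √(1 - (1 + β) / κ) - √((1 + α) / κ) * √((1 + β) / κ) ≤
      ∑ x, d x * |u x * v x| := by
  have h := sqrt_mul_sqrt_sub_le_inner (norm_unitConst hd)
    ((norm_weightEquiv_abs hd u).trans hu) ((norm_weightEquiv_abs hd v).trans hv)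
    (inner_unitConst_nonneg hd fun x => abs_nonneg (u x))
    (inner_unitConst_nonneg hd fun x => abs_nonneg (v x))
    (one_sub_le_inner_abs_unitConst_sq ha hsymm hrow hd hκ (hpoincare _) hu hα)
    (one_sub_le_inner_abs_unitConst_sq ha hsymm hrow hd hκ (hpoincare _) hv hβ)
  simpa only [inner_weightEquiv, Pi.abs_apply, ← abs_mul] using h

theorem isoperimetric_mul_cos_le {ι : Type*} [Fintype ι] {μ : ι → ℝ} {c m : ℝ}
    (ha : ∀ x y, 0 ≤ a x y) (hsymm : ∀ x y, a x y = a y x) (hrow : ∀ x, ∑ y, a x y = d x)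
    (hd : ∀ x, 0 < d x) (hc : 0 ≤ c)
    (hcut : ∀ S : Finset V, ∑ x ∈ S, d x ≤ ∑ x ∈ Sᶜ, d x →
      c * ∑ x ∈ S, d x ≤ ∑ x ∈ S, ∑ y ∈ Sᶜ, a x y)
    (b : OrthonormalBasis ι ℝ (EuclideanSpace ℝ V))
    (hb : ∀ i, walkOperator a hd (b i) = μ i • b i)
    {i₀ k l : ι} (hi₀ : μ i₀ = 1) (hm : ∀ i, i ≠ i₀ → μ i ≤ m) (hm1 : m < 1) (hkl : k ≠ l) :
    c * (√(1 - (1 + μ k) / (1 - m)) * √(1 - (1 + μ l) / (1 - m)) -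
      √((1 + μ k) / (1 - m)) * √((1 + μ l) / (1 - m))) ≤ √2 * (√(1 + μ k) + √(1 + μ l)) := by
  have : Nonempty V := not_isEmpty_iff.1 fun _ => b.orthonormal.ne_zero k (Subsingleton.elim _ _)
  obtain ⟨u, hu⟩ := (weightEquiv hd).surjective (b k)
  obtain ⟨v, hv⟩ := (weightEquiv hd).surjective (b l)
  have hu_norm : ‖weightEquiv hd u‖ = 1 := hu ▸ b.orthonormal.1 k
  have hv_norm : ‖weightEquiv hd v‖ = 1 := hv ▸ b.orthonormal.1 l
  have hu_eigen : walkOperator a hd (weightEquiv hd u) = μ k • weightEquiv hd u := hu ▸ hb k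
  have hv_eigen : walkOperator a hd (weightEquiv hd v) = μ l • weightEquiv hd v := hv ▸ hb l
  have hmean : ∑ x, d x * (u x * v x) = 0 := by
    rw [← inner_weightEquiv hd, hu, hv]
    exact b.orthonormal.2 hkl
  calc _ ≤ c * ∑ x, d x * |u x * v x| :=
        mul_le_mul_of_nonneg_left (sqrt_mul_sqrt_sub_le_sum_abs ha hsymm hrow hd (sub_pos.2 hm1)
          (poincare_of_spectral_gap hsymm hrow hd b hb hi₀ hm hm1) hu_norm hv_norm hu_eigen
          hv_eigen) hc
    _ ≤ ∑ x, ∑ y, a x y * |u x * v x - u y * v y| :=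
        mul_sum_mul_abs_le_of_mean_zero ha hsymm (fun x => (hd x).le) hcut _ hmean
    _ ≤ √2 * (√(1 + μ k) + √(1 + μ l)) :=
        sum_mul_abs_mul_sub_mul_le_of_eigen ha hsymm hrow hd hu_norm hv_norm hu_eigen hv_eigen

end WeightedGraph

lemma sqrt_mul_sqrt_lt_of_add_lt_one {s t : ℝ} (hs : 0 ≤ s) (ht : 0 ≤ t) (hst : s + t < 1) :
    √s * √t < √(1 - s) * √(1 - t) := by
  rw [← Real.sqrt_mul hs, ← Real.sqrt_mul (by linarith)]
  exact Real.sqrt_lt_sqrt (mul_nonneg hs ht) (by linarith)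

section Graph

variable {V : Type*} [Fintype V] (G : SimpleGraph V)

lemma bdry_eq_sum_adjMatrix (S : Finset V) : bdry G S = ∑ x ∈ S, ∑ y ∈ Sᶜ, G.adjMatrix ℝ x y := by
  simp only [bdry, SimpleGraph.adjMatrix_apply]

lemma walkMatrix_adjMatrix :
    walkMatrix (G.adjMatrix ℝ) (fun x => (G.degree x : ℝ)) = normAdj G := by
  ext x y
  simp [walkMatrix, normAdj, SimpleGraph.adjMatrix_apply, ite_div]

lemma bdry_div_min_vol_nonneg (S : Finset V) : 0 ≤ bdry G S / min (vol G S) (vol G Sᶜ) := by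
  have vol_nonneg (T : Finset V) : 0 ≤ vol G T := Finset.sum_nonneg fun _ _ => Nat.cast_nonneg _
  refine div_nonneg (Finset.sum_nonneg fun x _ => Finset.sum_nonneg fun y _ => ?_)
    (le_min (vol_nonneg S) (vol_nonneg Sᶜ))
  split_ifs <;> norm_num

lemma cheeger_nonneg : 0 ≤ cheeger G := by
  refine Real.sInf_nonneg ?_
  rintro _ ⟨S, -, -, rfl⟩
  exact bdry_div_min_vol_nonneg G S

lemma cheeger_mul_vol_le_bdry (hdeg : ∀ x, 0 < G.degree x) {S : Finset V}
    (hvol : vol G S ≤ vol G Sᶜ) : cheeger G * vol G S ≤ bdry G S := by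
  rcases S.eq_empty_or_nonempty with rfl | hS
  · simp [vol, bdry]
  have hpos : 0 < vol G S := Finset.sum_pos (fun x _ => Nat.cast_pos.2 (hdeg x)) hS
  have hne : S ≠ univ := by
    rintro rfl
    rw [Finset.compl_univ, vol, vol, Finset.sum_empty] at hvol
    exact hpos.not_ge hvol
  rw [← le_div_iff₀ hpos]
  refine csInf_le ⟨0, ?_⟩ ⟨S, hS, hne, by rw [min_eq_left hvol]⟩
  rintro _ ⟨T, -, -, rfl⟩
  exact bdry_div_min_vol_nonneg G T

theorem cheeger_le_ratio_general (hdeg : ∀ x, 0 < G.degree x) {ι : Type*} [Fintype ι] {μ : ι → ℝ}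
    (hchar : (normAdj G).charpoly = ∏ i, (X - C (μ i))) {i₀ k l : ι} (hi₀ : μ i₀ = 1) {m : ℝ}
    (hm : ∀ i, i ≠ i₀ → μ i ≤ m) (hkl : k ≠ l) (hsum : (1 + μ k) + (1 + μ l) < 1 - m) :
    √2 / 2 * cheeger G ≤ (√(1 + μ k) + √(1 + μ l)) /
      (√(1 - (1 + μ k) / (1 - m)) * √(1 - (1 + μ l) / (1 - m)) -
        √((1 + μ k) / (1 - m)) * √((1 + μ l) / (1 - m))) := by
  have ha (x y : V) : 0 ≤ G.adjMatrix ℝ x y := by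
    rw [SimpleGraph.adjMatrix_apply]; split_ifs <;> norm_num
  have hsymm (x y : V) : G.adjMatrix ℝ x y = G.adjMatrix ℝ y x := (G.isSymm_adjMatrix).apply y x
  have hrow (x : V) : ∑ y, G.adjMatrix ℝ x y = G.degree x := by
    simp [SimpleGraph.adjMatrix_apply, ← SimpleGraph.card_neighborFinset_eq_degree,
      SimpleGraph.neighborFinset_eq_filter]
  have hd (x : V) : (0 : ℝ) < G.degree x := Nat.cast_pos.2 (hdeg x)
  obtain ⟨b, hb⟩ := exists_eigenbasis_of_charpoly_eq_prod (isSymmetric_walkOperator hsymm hd)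
    (by rwa [charpoly_walkOperator, walkMatrix_adjMatrix])
  have hμ (i : ι) : 0 ≤ 1 + μ i :=
    one_add_nonneg_of_eigen ha hsymm hrow hd (b.orthonormal.1 i) (hb i)
  have hm1 : 0 < 1 - m := (add_nonneg (hμ k) (hμ l)).trans_lt hsum
  have hcos := sqrt_mul_sqrt_lt_of_add_lt_one (div_nonneg (hμ k) hm1.le) (div_nonneg (hμ l) hm1.le)
    (by rwa [← add_div, div_lt_one hm1])
  have hmain := isoperimetric_mul_cos_le ha hsymm hrow hd (cheeger_nonneg G)
    (fun S hS => (cheeger_mul_vol_le_bdry G hdeg hS).trans_eq (bdry_eq_sum_adjMatrix G S))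
    b hb hi₀ hm (sub_pos.1 hm1) hkl
  rw [le_div_iff₀ (sub_pos.2 hcos), mul_assoc, div_mul_eq_mul_div, div_le_iff₀ two_pos]
  refine (mul_le_mul_of_nonneg_left hmain (Real.sqrt_nonneg 2)).trans_eq ?_
  rw [← mul_assoc, Real.mul_self_sqrt zero_le_two, mul_comm]

end Graph

/-- **Key inequality in the proof of Theorem 1**: for a finite connected graph with
normalized adjacency eigenvalues `μs (n-1) = μₙ ≤ ⋯ ≤ μs 1 = μ₂ ≤ μs 0 = μ₁ = 1`
(listed with multiplicity, in decreasing order, as the roots of the characteristic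
polynomial of `D⁻¹A`) and edge-expansion `h`, if `1 + μ_{n-1} < (1-μ₂)/2`, then
`(√2/2)h ≤ (√(1+μₙ) + √(1+μ_{n-1})) /
  (√(1-(1+μₙ)/(1-μ₂))·√(1-(1+μ_{n-1})/(1-μ₂)) - √((1+μₙ)/(1-μ₂))·√((1+μ_{n-1})/(1-μ₂)))`. -/
theorem cheeger_le_ratio {V : Type*} [Fintype V] (G : SimpleGraph V)
    (hconn : G.Connected) (hn : 2 ≤ Fintype.card V)
    (μs : Fin (Fintype.card V) → ℝ) (hanti : Antitone μs)
    (hchar : (normAdj G).charpoly = ∏ i, (X - C (μs i)))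
    (hμ1 : μs ⟨0, by omega⟩ = 1)
    (hsmall : 1 + μs ⟨Fintype.card V - 2, by omega⟩ < (1 - μs ⟨1, by omega⟩) / 2) :
    Real.sqrt 2 / 2 * cheeger G ≤
      (Real.sqrt (1 + μs ⟨Fintype.card V - 1, by omega⟩) +
        Real.sqrt (1 + μs ⟨Fintype.card V - 2, by omega⟩)) /
      (Real.sqrt (1 - (1 + μs ⟨Fintype.card V - 1, by omega⟩) / (1 - μs ⟨1, by omega⟩)) *
        Real.sqrt (1 - (1 + μs ⟨Fintype.card V - 2, by omega⟩) / (1 - μs ⟨1, by omega⟩)) -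
       Real.sqrt ((1 + μs ⟨Fintype.card V - 1, by omega⟩) / (1 - μs ⟨1, by omega⟩)) *
        Real.sqrt ((1 + μs ⟨Fintype.card V - 2, by omega⟩) / (1 - μs ⟨1, by omega⟩))) := by
  have := Fintype.one_lt_card_iff_nontrivial.1 hn
  have hle : μs ⟨Fintype.card V - 1, by omega⟩ ≤ μs ⟨Fintype.card V - 2, by omega⟩ :=
    hanti (Fin.mk_le_mk.2 (by omega))
  exact cheeger_le_ratio_general G
    (fun x => hconn.preconnected.degree_pos_of_nontrivial x) hchar hμ1
    (fun i hi => hanti (Fin.mk_le_mk.2 (Nat.one_le_iff_ne_zero.2 (Fin.val_ne_of_ne hi))))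
    (Fin.ne_of_val_ne (by dsimp only; omega)) (by linarith)

end
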